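/- Let f_i : ℝ^d → ℝ, i ∈ {1,…,n}, be twice continuously differentiable with ‖∇²f_i(x) − ∇²f_i(y)‖ ≤ H‖x − y‖ (spectral norm), let f := (1/n)Σ_i f_i be μ-strongly convex (μ > 0), and let x* satisfy ∇f(x*) = 0. For each i, let {B_i^{jl} : j,l ∈ [d]} be real d×d matrices with ‖B_i^{jl}‖_F ≤ R and let ℓ_i : ℝ^d → ℝ^{d×d} satisfy ∇²f_i(x) = Σ_{j,l} (ℓ_i(x))_{jl} B_i^{jl} for all x and ‖ℓ_i(x) − ℓ_i(y)‖_F ≤ M₁‖x − y‖. Set N_B := 1 if for every i the family {B_i^{jl}} is pairwise orthogonal in the Frobenius inner product, and N_B := d² otherwise. Fix 0 < δ ≤ 1 and 0 < δ_M ≤ 1 and set A_M := δ_M/4, B_M := 6/δ_M − 7/2. Consider sequences z^k ∈ ℝ^d and L_i^k ∈ ℝ^{d×d} (k ≥ 0) generated by: L_i^{k+1} = L_i^k + S_i^k where ‖S_i^k − (ℓ_i(z^k) − L_i^k)‖_F² ≤ (1 − δ)‖ℓ_i(z^k) − L_i^k‖_F²; H^k := (1/n)Σ_i Σ_{j,l}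 (L_i^k)_{jl} B_i^{jl}; Ĥ^k a symmetric matrix with Ĥ^k ⪰ μI and ‖Ĥ^k − ∇²f(x*)‖_F ≤ ‖H^k − ∇²f(x*)‖_F; x^{k+1} := z^k − (Ĥ^k)⁻¹ ∇f(z^k); and z^{k+1} := z^k + v^k where ‖v^k − (x^{k+1} − z^k)‖² ≤ (1 − δ_M)‖x^{k+1} − z^k‖². Define 𝓗^k := (1/n)Σ_i ‖L_i^k − ℓ_i(x*)‖_F². If for every k ≥ 0 one has ‖z^k − x*‖² ≤ A_M μ²/(4H² B_M) and 𝓗^k ≤ A_M μ²/(16 N_B R² B_M), then ‖z^k − x*‖² ≤ (1 − A_M/2)^k ‖z⁰ − x*‖² for all k ≥ 0. -/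

import Mathlib

open Matrix Classical

/-- Frobenius inner product of matrices. -/
noncomputable def frobInner {d : ℕ} (M N : Matrix (Fin d) (Fin d) ℝ) : ℝ :=
  ∑ s, ∑ t, M s t * N s t

/-- Frobenius norm squared: sum of squares of all entries. -/
noncomputable def frobSq {d : ℕ} (M : Matrix (Fin d) (Fin d) ℝ) : ℝ :=
  ∑ i, ∑ j, (M i j) ^ 2

/-- Frobenius norm. -/
noncomputable def frobNorm {d : ℕ} (M : Matrix (Fin d) (Fin d) ℝ) : ℝ :=
  Real.sqrt (frobSq M)

/-- Spectral norm (operator 2-norm) of a matrix. -/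
noncomputable def specNorm {d : ℕ} (M : Matrix (Fin d) (Fin d) ℝ) : ℝ :=
  ‖Matrix.toEuclideanCLM (𝕜 := ℝ) M‖

/-- The Hessian matrix of `f` at `x` (the derivative of the gradient). -/
noncomputable def hess {d : ℕ} (f : EuclideanSpace ℝ (Fin d) → ℝ)
    (x : EuclideanSpace ℝ (Fin d)) : Matrix (Fin d) (Fin d) ℝ :=
  fun j l => fderiv ℝ (gradient f) x (EuclideanSpace.single l 1) j

/-!
Let `C` be a Lipschitz constant of the Hessian. A quasi-Newton step `x⁺ = z - T⁻¹ ∇f(z)` with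
`T ⪰ μ I` satisfies `μ ‖x⁺ - x*‖ ≤ ‖T - ∇²f(x*)‖ ‖z - x*‖ + C / 2 ‖z - x*‖²`: apply `T` to
`x⁺ - x*` and expand `∇f(z)` around `x*`. The model compressor moves `z` to some `z⁺` with
`‖z⁺ - x⁺‖² ≤ (1 - δ) ‖x⁺ - z‖²`, and Young's inequality, used once to pass from `z⁺ - x*` to
`x⁺ - z` and once to pass from `x⁺ - z` to `z - x*`, gives
`‖z⁺ - x*‖² ≤ (1 - δ / 4) ‖z - x*‖² + (6 / δ - 7 / 2) ‖x⁺ - x*‖²`,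
which is where `A_M` and `B_M` come from. Both the distance of `z` to `x*` and the error
of `T`, which is controlled by the Frobenius error of the coefficient matrices, are small enough
for the last term to be at most `A_M / 2 ‖z - x*‖²`.
-/

section FiniteSums

variable {ι E : Type*} [Fintype ι]

lemma norm_sq_mean_le_mean_norm_sq [SeminormedAddCommGroup E] [NormedSpace ℝ E] (x : ι → E) :
    ‖(1 / (Fintype.card ι : ℝ)) • ∑ i, x i‖ ^ 2 ≤
      (1 / (Fintype.card ι : ℝ)) * ∑ i, ‖x i‖ ^ 2 :=
  calc ‖(1 / (Fintype.card ι : ℝ)) • ∑ i, x i‖ ^ 2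
      ≤ ((∑ i, ‖x i‖) / Fintype.card ι) ^ 2 := by
        rw [norm_smul, Real.norm_of_nonneg (by positivity), one_div_mul_eq_div]
        gcongr
        exact norm_sum_le _ _
    _ ≤ (∑ i, ‖x i‖ ^ 2) / Fintype.card ι := sum_div_card_sq_le_sum_sq_div_card
    _ = (1 / (Fintype.card ι : ℝ)) * ∑ i, ‖x i‖ ^ 2 := (one_div_mul_eq_div _ _).symm

lemma norm_sq_sum_smul_le [SeminormedAddCommGroup E] [NormedSpace ℝ E] {b : ι → E} {R : ℝ}
    (hb : ∀ i, ‖b i‖ ≤ R) (c : ι → ℝ) :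
    ‖∑ i, c i • b i‖ ^ 2 ≤ Fintype.card ι * R ^ 2 * ∑ i, c i ^ 2 :=
  calc ‖∑ i, c i • b i‖ ^ 2 ≤ (∑ i, |c i| * ‖b i‖) ^ 2 := by
        gcongr
        exact norm_sum_le_of_le _ fun i _ => (norm_smul (c i) (b i)).le
    _ ≤ (∑ i, |c i| ^ 2) * ∑ i, ‖b i‖ ^ 2 := Finset.sum_mul_sq_le_sq_mul_sq _ _ _
    _ ≤ (∑ i, |c i| ^ 2) * ∑ _i : ι, R ^ 2 := by gcongr with i; exact hb i
    _ = Fintype.card ι * R ^ 2 * ∑ i, c i ^ 2 := by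
        simp only [sq_abs, Finset.sum_const, Finset.card_univ, nsmul_eq_mul]
        ring

lemma norm_sq_sum_eq_of_pairwise_inner_eq_zero [SeminormedAddCommGroup E] [InnerProductSpace ℝ E]
    {x : ι → E} (hx : Pairwise fun i j => inner ℝ (x i) (x j) = 0) :
    ‖∑ i, x i‖ ^ 2 = ∑ i, ‖x i‖ ^ 2 := by
  simp only [← real_inner_self_eq_norm_sq, sum_inner, inner_sum]
  exact Finset.sum_congr rfl fun i _ =>
    Finset.sum_eq_single i (fun j _ hji => hx hji) fun hi => (hi (Finset.mem_univ i)).elim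

lemma norm_sq_sum_smul_le_of_pairwise_inner_eq_zero [SeminormedAddCommGroup E]
    [InnerProductSpace ℝ E] {b : ι → E} (hb : Pairwise fun i j => inner ℝ (b i) (b j) = 0)
    {R : ℝ} (hbR : ∀ i, ‖b i‖ ≤ R) (c : ι → ℝ) :
    ‖∑ i, c i • b i‖ ^ 2 ≤ R ^ 2 * ∑ i, c i ^ 2 := by
  have hcb : Pairwise fun i j => inner ℝ (c i • b i) (c j • b j) = 0 := fun i j hij => by
    simp only [real_inner_smul_left, real_inner_smul_right, hb hij, mul_zero]
  rw [norm_sq_sum_eq_of_pairwise_inner_eq_zero hcb, Finset.mul_sum]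
  gcongr with i
  rw [norm_smul, mul_pow, Real.norm_eq_abs, sq_abs, mul_comm]
  gcongr
  exact hbR i

end FiniteSums

section Young

variable {E : Type*} [SeminormedAddCommGroup E]

lemma norm_add_sq_le_young (a b : E) {t : ℝ} (ht : 0 < t) :
    ‖a + b‖ ^ 2 ≤ (1 + t) * ‖a‖ ^ 2 + (1 + 1 / t) * ‖b‖ ^ 2 := by
  have hcross : 0 ≤ t * (‖a‖ - ‖b‖ / t) ^ 2 := by positivity
  calc ‖a + b‖ ^ 2 ≤ (‖a‖ + ‖b‖) ^ 2 := by gcongr; exact norm_add_le a b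
    _ ≤ (‖a‖ + ‖b‖) ^ 2 + t * (‖a‖ - ‖b‖ / t) ^ 2 := le_add_of_nonneg_right hcross
    _ = (1 + t) * ‖a‖ ^ 2 + (1 + 1 / t) * ‖b‖ ^ 2 := by field_simp; ring

lemma norm_add_sq_le_of_norm_sq_le {δ : ℝ} (hδ₀ : 0 < δ) (hδ₁ : δ ≤ 1) {a e w : E}
    (he : ‖e‖ ^ 2 ≤ (1 - δ) * ‖w‖ ^ 2) :
    ‖a + e‖ ^ 2 ≤ (2 / δ - 1) * ‖a‖ ^ 2 + (1 - δ / 2) * ‖w‖ ^ 2 := by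
  -- Young's inequality with weight `δ / 2` on `‖w‖²`; the shape avoids dividing by `1 - δ = 0`.
  have hρ : √(1 - δ) ^ 2 = 1 - δ := Real.sq_sqrt (sub_nonneg.2 hδ₁)
  have he' : ‖e‖ ≤ √(1 - δ) * ‖w‖ :=
    le_of_sq_le_sq (by rwa [mul_pow, hρ]) (by positivity)
  have hcross : 0 ≤ δ / 2 * (2 * √(1 - δ) / δ * ‖a‖ - ‖w‖) ^ 2 := by positivity
  calc ‖a + e‖ ^ 2 ≤ (‖a‖ + √(1 - δ) * ‖w‖) ^ 2 := by
        gcongr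
        exact (norm_add_le a e).trans (by gcongr)
    _ ≤ (‖a‖ + √(1 - δ) * ‖w‖) ^ 2 + δ / 2 * (2 * √(1 - δ) / δ * ‖a‖ - ‖w‖) ^ 2 :=
        le_add_of_nonneg_right hcross
    _ = (1 + √(1 - δ) ^ 2 * (2 / δ)) * ‖a‖ ^ 2 + (√(1 - δ) ^ 2 + δ / 2) * ‖w‖ ^ 2 := by
        field_simp
        ring
    _ = (2 / δ - 1) * ‖a‖ ^ 2 + (1 - δ / 2) * ‖w‖ ^ 2 := by rw [hρ]; field_simp; ring

lemma compressed_step_dist_sq_le {δ : ℝ} (hδ₀ : 0 < δ) (hδ₁ : δ ≤ 1) {x y z z' : E}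
    (hz' : ‖z' - x‖ ^ 2 ≤ (1 - δ) * ‖x - z‖ ^ 2) :
    ‖z' - y‖ ^ 2 ≤ (1 - δ / 4) * ‖z - y‖ ^ 2 + (6 / δ - 7 / 2) * ‖x - y‖ ^ 2 := by
  -- The Young parameter `t = δ / (2 (2 - δ))` is chosen so that `(1 - δ / 2) (1 + t) = 1 - δ / 4`.
  have hδ₂ : 0 < 2 - δ := by linarith
  have hz : ‖x - z‖ ^ 2 ≤
      (1 + δ / (2 * (2 - δ))) * ‖z - y‖ ^ 2 + (1 + 1 / (δ / (2 * (2 - δ)))) * ‖x - y‖ ^ 2 := by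
    have := norm_add_sq_le_young (z - y) (y - x) (t := δ / (2 * (2 - δ))) (by positivity)
    rwa [sub_add_sub_cancel, norm_sub_rev z x, norm_sub_rev y x] at this
  calc ‖z' - y‖ ^ 2 = ‖x - y + (z' - x)‖ ^ 2 := by rw [add_comm, sub_add_sub_cancel]
    _ ≤ (2 / δ - 1) * ‖x - y‖ ^ 2 + (1 - δ / 2) * ‖x - z‖ ^ 2 :=
        norm_add_sq_le_of_norm_sq_le hδ₀ hδ₁ hz'
    _ ≤ (2 / δ - 1) * ‖x - y‖ ^ 2 + (1 - δ / 2) * ((1 + δ / (2 * (2 - δ))) * ‖z - y‖ ^ 2 +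
          (1 + 1 / (δ / (2 * (2 - δ)))) * ‖x - y‖ ^ 2) := by
        gcongr
        linarith
    _ = (1 - δ / 4) * ‖z - y‖ ^ 2 + (6 / δ - 4 + δ / 2) * ‖x - y‖ ^ 2 := by
        field_simp
        ring
    _ ≤ (1 - δ / 4) * ‖z - y‖ ^ 2 + (6 / δ - 7 / 2) * ‖x - y‖ ^ 2 := by
        gcongr
        linarith

end Young

section QuasiNewton

variable {E G : Type*} [NormedAddCommGroup E] [NormedSpace ℝ E] [NormedAddCommGroup G]
  [NormedSpace ℝ G]

lemma norm_sub_sub_fderiv_le_of_fderiv_lipschitz {F : E → G} (hF : Differentiable ℝ F) {C : ℝ}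
    (hLip : ∀ x y, ‖fderiv ℝ F x - fderiv ℝ F y‖ ≤ C * ‖x - y‖) (z y : E) :
    ‖F z - F y - fderiv ℝ F y (z - y)‖ ≤ C / 2 * ‖z - y‖ ^ 2 := by
  -- Along the segment `y + t • w` the remainder has derivative `O(t)`, hence the factor `1 / 2`.
  set w := z - y with hw
  let r : ℝ → G := fun t => F (y + t • w) - F y - t • fderiv ℝ F y w
  have hline (t : ℝ) : HasDerivAt (fun s : ℝ => y + s • w) w t := by
    simpa only [id_eq, one_smul] using ((hasDerivAt_id t).smul_const w).const_add y
  have hr (t : ℝ) : HasDerivAt r ((fderiv ℝ F (y + t • w) - fderiv ℝ F y) w) t := by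
    simpa only [id_eq, one_smul] using!
      (((hF _).hasFDerivAt.comp_hasDerivAt t (hline t)).sub_const (F y)).sub
        ((hasDerivAt_id t).smul_const (fderiv ℝ F y w))
  have hbound (t : ℝ) (ht : t ∈ Set.Ico (0 : ℝ) 1) :
      ‖(fderiv ℝ F (y + t • w) - fderiv ℝ F y) w‖ ≤ C / 2 * ‖w‖ ^ 2 * (2 * t) :=
    calc ‖(fderiv ℝ F (y + t • w) - fderiv ℝ F y) w‖
        ≤ C * ‖y + t • w - y‖ * ‖w‖ := ContinuousLinearMap.le_of_opNorm_le _ (hLip _ _) _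
      _ = C / 2 * ‖w‖ ^ 2 * (2 * t) := by
          rw [add_sub_cancel_left, norm_smul, Real.norm_of_nonneg ht.1]
          ring
  have hquad (t : ℝ) :
      HasDerivAt (fun s => C / 2 * ‖w‖ ^ 2 * s ^ 2) (C / 2 * ‖w‖ ^ 2 * (2 * t)) t := by
    simpa using (hasDerivAt_pow 2 t).const_mul (C / 2 * ‖w‖ ^ 2)
  have := image_norm_le_of_norm_deriv_right_le_deriv_boundary
    (fun t _ => (hr t).continuousAt.continuousWithinAt) (fun t _ => (hr t).hasDerivWithinAt)
    (by simp [r]) hquad hbound (Set.right_mem_Icc.2 zero_le_one)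
  simpa [r, hw] using this

lemma quasiNewton_step_error_le {F : E → G} (hF : Differentiable ℝ F) {C : ℝ}
    (hLip : ∀ x y, ‖fderiv ℝ F x - fderiv ℝ F y‖ ≤ C * ‖x - y‖) {y : E} (hy : F y = 0)
    {T : E →L[ℝ] G} {μ : ℝ} (hT : ∀ u, μ * ‖u‖ ≤ ‖T u‖) {z x : E} (hx : T (x - z) = -F z) :
    μ * ‖x - y‖ ≤ ‖T - fderiv ℝ F y‖ * ‖z - y‖ + C / 2 * ‖z - y‖ ^ 2 := by
  have herror : T (x - y) = (T - fderiv ℝ F y) (z - y) - (F z - F y - fderiv ℝ F y (z - y)) := by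
    rw [← sub_add_sub_cancel x z y, map_add, hx, hy, _root_.sub_apply]
    abel
  calc μ * ‖x - y‖ ≤ ‖T (x - y)‖ := hT _
    _ ≤ ‖(T - fderiv ℝ F y) (z - y)‖ + ‖F z - F y - fderiv ℝ F y (z - y)‖ :=
        herror ▸ norm_sub_le _ _
    _ ≤ ‖T - fderiv ℝ F y‖ * ‖z - y‖ + C / 2 * ‖z - y‖ ^ 2 :=
        add_le_add (ContinuousLinearMap.le_opNorm _ _)
          (norm_sub_sub_fderiv_le_of_fderiv_lipschitz hF hLip z y)

lemma mul_sq_le_of_mul_le_quadratic {A B C F a b μ : ℝ} (hB : 0 ≤ B) (hμ : 0 < μ) (hb : 0 ≤ b)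
    (hstep : μ * b ≤ F * a + C / 2 * a ^ 2) (ha : a ^ 2 * (4 * C ^ 2 * B) ≤ A * μ ^ 2)
    (hF : F ^ 2 * (16 * B) ≤ A * μ ^ 2) : B * b ^ 2 ≤ A / 4 * a ^ 2 := by
  have hsq : μ ^ 2 * b ^ 2 ≤ (2 * F ^ 2 + C ^ 2 / 2 * a ^ 2) * a ^ 2 :=
    calc μ ^ 2 * b ^ 2 = (μ * b) ^ 2 := (mul_pow μ b 2).symm
      _ ≤ (F * a + C / 2 * a ^ 2) ^ 2 := by gcongr
      _ ≤ 2 * ((F * a) ^ 2 + (C / 2 * a ^ 2) ^ 2) := add_sq_le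
      _ = (2 * F ^ 2 + C ^ 2 / 2 * a ^ 2) * a ^ 2 := by ring
  refine le_of_mul_le_mul_left ?_ (pow_pos hμ 2)
  calc μ ^ 2 * (B * b ^ 2) = B * (μ ^ 2 * b ^ 2) := by ring
    _ ≤ B * ((2 * F ^ 2 + C ^ 2 / 2 * a ^ 2) * a ^ 2) := by gcongr
    _ = ((F ^ 2 * (16 * B)) / 8 + (a ^ 2 * (4 * C ^ 2 * B)) / 8) * a ^ 2 := by ring
    _ ≤ (A * μ ^ 2 / 8 + A * μ ^ 2 / 8) * a ^ 2 := by gcongr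
    _ = μ ^ 2 * (A / 4 * a ^ 2) := by ring

lemma six_div_sub_nonneg {δ : ℝ} (hδ₀ : 0 < δ) (hδ₁ : δ ≤ 1) : 0 ≤ 6 / δ - 7 / 2 := by
  have : 6 ≤ 6 / δ := (le_div_iff₀ hδ₀).2 (by linarith)
  linarith

lemma compressed_quasiNewton_linear_convergence {F : E → G} (hF : Differentiable ℝ F) {C : ℝ}
    (hLip : ∀ x y, ‖fderiv ℝ F x - fderiv ℝ F y‖ ≤ C * ‖x - y‖) {y : E} (hy : F y = 0)
    {μ δ A B : ℝ} (hμ : 0 < μ) (hδ₀ : 0 < δ) (hδ₁ : δ ≤ 1) (hA : A = δ / 4)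
    (hB : B = 6 / δ - 7 / 2) {z x : ℕ → E} {T : ℕ → E →L[ℝ] G}
    (hT : ∀ k u, μ * ‖u‖ ≤ ‖T k u‖) (hx : ∀ k, T k (x (k + 1) - z k) = -F (z k))
    (hz : ∀ k, ‖z (k + 1) - x (k + 1)‖ ^ 2 ≤ (1 - δ) * ‖x (k + 1) - z k‖ ^ 2)
    (hz_near : ∀ k, ‖z k - y‖ ^ 2 * (4 * C ^ 2 * B) ≤ A * μ ^ 2)
    (hT_near : ∀ k, ‖T k - fderiv ℝ F y‖ ^ 2 * (16 * B) ≤ A * μ ^ 2) (k : ℕ) :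
    ‖z k - y‖ ^ 2 ≤ (1 - A / 2) ^ k * ‖z 0 - y‖ ^ 2 := by
  have hB₀ : 0 ≤ B := hB ▸ six_div_sub_nonneg hδ₀ hδ₁
  refine le_geom (u := fun k => ‖z k - y‖ ^ 2) (by linarith) k fun k _ => ?_
  have hnewton : B * ‖x (k + 1) - y‖ ^ 2 ≤ A / 4 * ‖z k - y‖ ^ 2 :=
    mul_sq_le_of_mul_le_quadratic hB₀ hμ (norm_nonneg _)
      (quasiNewton_step_error_le hF hLip hy (hT k) (hx k)) (hz_near k) (hT_near k)
  calc ‖z (k + 1) - y‖ ^ 2 ≤ (1 - A) * ‖z k - y‖ ^ 2 + B * ‖x (k + 1) - y‖ ^ 2 := by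
        rw [hA, hB]
        exact compressed_step_dist_sq_le hδ₀ hδ₁ (hz k)
    _ ≤ (1 - A) * ‖z k - y‖ ^ 2 + A / 2 * ‖z k - y‖ ^ 2 := by
        refine add_le_add_right (hnewton.trans ?_) _
        gcongr
        · linarith
        · norm_num
    _ = (1 - A / 2) * ‖z k - y‖ ^ 2 := by ring

end QuasiNewton

section PositiveDefinite

variable {m : Type*} [Fintype m] [DecidableEq m] {A : Matrix m m ℝ} {μ : ℝ}

lemma mul_norm_le_norm_toEuclideanCLM_of_posSemidef_sub
    (hA : (A - μ • (1 : Matrix m m ℝ)).PosSemidef) (u : EuclideanSpace ℝ m) :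
    μ * ‖u‖ ≤ ‖Matrix.toEuclideanCLM (𝕜 := ℝ) A u‖ := by
  have hinner : μ * ‖u‖ ^ 2 ≤ inner ℝ u (Matrix.toEuclideanCLM (𝕜 := ℝ) A u) := by
    have hnonneg : 0 ≤ inner ℝ u (Matrix.toEuclideanCLM (𝕜 := ℝ) (A - μ • 1) u) := by
      simpa only [Matrix.inner_toEuclideanCLM] using! hA.dotProduct_mulVec_nonneg u.ofLp
    rw [map_sub, map_smul, map_one, _root_.sub_apply, inner_sub_right] at hnonneg
    simpa [inner_smul_right] using hnonneg
  rcases (norm_nonneg u).eq_or_lt with hu | hu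
  · rw [← hu, mul_zero]
    exact norm_nonneg _
  · refine le_of_mul_le_mul_right ?_ hu
    calc μ * ‖u‖ * ‖u‖ = μ * ‖u‖ ^ 2 := by ring
      _ ≤ ‖u‖ * ‖Matrix.toEuclideanCLM (𝕜 := ℝ) A u‖ := hinner.trans (real_inner_le_norm _ _)
      _ = ‖Matrix.toEuclideanCLM (𝕜 := ℝ) A u‖ * ‖u‖ := mul_comm _ _

lemma toEuclideanCLM_apply_inv_apply_of_posSemidef_sub (hμ : 0 < μ)
    (hA : (A - μ • (1 : Matrix m m ℝ)).PosSemidef) (u : EuclideanSpace ℝ m) :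
    Matrix.toEuclideanCLM (𝕜 := ℝ) A (Matrix.toEuclideanCLM (𝕜 := ℝ) A⁻¹ u) = u := by
  have hpos : A.PosDef := by simpa using (Matrix.PosDef.one.smul hμ).add_posSemidef hA
  rw [← _root_.mul_apply_eq_comp, ← map_mul,
    A.mul_nonsing_inv ((Matrix.isUnit_iff_isUnit_det A).1 hpos.isUnit), map_one,
    _root_.one_apply_eq_self]

end PositiveDefinite

section Frobenius

variable {d : ℕ}

/-- The entries of a matrix, listed as a vector indexed by pairs. It turns the Frobenius inner
product and norm into those of a Euclidean space, so that Hilbert space lemmas apply. -/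
noncomputable def frobVec :
    Matrix (Fin d) (Fin d) ℝ →ₗ[ℝ] EuclideanSpace ℝ (Fin d × Fin d) where
  toFun M := WithLp.toLp 2 fun p => M p.1 p.2
  map_add' _ _ := rfl
  map_smul' _ _ := rfl

lemma frobVec_apply (M : Matrix (Fin d) (Fin d) ℝ) (p : Fin d × Fin d) :
    frobVec M p = M p.1 p.2 := rfl

lemma inner_frobVec (M N : Matrix (Fin d) (Fin d) ℝ) :
    inner ℝ (frobVec M) (frobVec N) = frobInner M N := by
  simp [frobVec_apply, frobInner, PiLp.inner_apply, Fintype.sum_prod_type, mul_comm]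

lemma norm_frobVec_sq (M : Matrix (Fin d) (Fin d) ℝ) : ‖frobVec M‖ ^ 2 = frobSq M := by
  simp [frobVec_apply, frobSq, EuclideanSpace.norm_sq_eq, Fintype.sum_prod_type]

lemma norm_frobVec (M : Matrix (Fin d) (Fin d) ℝ) : ‖frobVec M‖ = frobNorm M := by
  rw [frobNorm, ← norm_frobVec_sq, Real.sqrt_sq (norm_nonneg _)]

lemma norm_toEuclideanCLM_le_frobNorm (M : Matrix (Fin d) (Fin d) ℝ) :
    ‖Matrix.toEuclideanCLM (𝕜 := ℝ) M‖ ≤ frobNorm M := by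
  refine ContinuousLinearMap.opNorm_le_bound _ (Real.sqrt_nonneg _) fun u => ?_
  refine le_of_sq_le_sq ?_ (mul_nonneg (Real.sqrt_nonneg _) (norm_nonneg u))
  rw [mul_pow, ← norm_frobVec, norm_frobVec_sq, frobSq, Finset.sum_mul]
  simp only [EuclideanSpace.norm_sq_eq, Real.norm_eq_abs, sq_abs, Matrix.ofLp_toEuclideanCLM,
    Matrix.mulVec, dotProduct]
  gcongr with i
  exact Finset.sum_mul_sq_le_sq_mul_sq _ _ _

lemma frobSq_mean_le_mean_frobSq {n : ℕ} (X : Fin n → Matrix (Fin d) (Fin d) ℝ) :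
    frobSq ((1 / (n : ℝ)) • ∑ i, X i) ≤ (1 / (n : ℝ)) * ∑ i, frobSq (X i) := by
  simpa only [← norm_frobVec_sq, map_smul, map_sum, Fintype.card_fin] using
    norm_sq_mean_le_mean_norm_sq fun i => frobVec (X i)

/-- The constant `N_B` of a family of bases: the factor by which expanding in one of the bases can
enlarge squared Frobenius norms, relative to the squared norms of the basis elements. -/
noncomputable def basisFactor {n : ℕ} (B : Fin n → Fin d → Fin d → Matrix (Fin d) (Fin d) ℝ) : ℝ :=
  if (∀ i (j l j' l' : Fin d), (j, l) ≠ (j', l') →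
    frobInner (B i j l) (B i j' l') = 0) then (1 : ℝ) else (d : ℝ) ^ 2

lemma basisFactor_nonneg {n : ℕ} (B : Fin n → Fin d → Fin d → Matrix (Fin d) (Fin d) ℝ) :
    0 ≤ basisFactor B := by
  unfold basisFactor
  split_ifs <;> positivity

lemma frobSq_expansion_le {n : ℕ} {B : Fin n → Fin d → Fin d → Matrix (Fin d) (Fin d) ℝ} {R : ℝ}
    (hB : ∀ i j l, frobNorm (B i j l) ≤ R) (i : Fin n) (c : Matrix (Fin d) (Fin d) ℝ) :
    frobSq (∑ j, ∑ l, c j l • B i j l) ≤ basisFactor B * R ^ 2 * frobSq c := by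
  have hR (p : Fin d × Fin d) : ‖frobVec (B i p.1 p.2)‖ ≤ R := norm_frobVec (B i _ _) ▸ hB i _ _
  have hexp : frobSq (∑ j, ∑ l, c j l • B i j l) =
      ‖∑ p : Fin d × Fin d, c p.1 p.2 • frobVec (B i p.1 p.2)‖ ^ 2 := by
    simp only [← norm_frobVec_sq, map_sum, map_smul, Fintype.sum_prod_type]
  have hc : frobSq c = ∑ p : Fin d × Fin d, c p.1 p.2 ^ 2 := by
    rw [frobSq, Fintype.sum_prod_type]
  rw [hexp, hc, basisFactor]
  split_ifs with horth
  · rw [one_mul]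
    refine norm_sq_sum_smul_le_of_pairwise_inner_eq_zero (fun p q hpq => ?_) hR _
    exact (inner_frobVec _ _).trans (horth i _ _ _ _ hpq)
  · simpa [sq] using norm_sq_sum_smul_le hR fun p => c p.1 p.2

lemma frobSq_mean_expansion_sub_le {n : ℕ}
    {B : Fin n → Fin d → Fin d → Matrix (Fin d) (Fin d) ℝ} {R : ℝ}
    (hB : ∀ i j l, frobNorm (B i j l) ≤ R) (c c' : Fin n → Matrix (Fin d) (Fin d) ℝ) :
    frobSq ((1 / (n : ℝ)) • ∑ i, ∑ j, ∑ l, c i j l • B i j l -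
        (1 / (n : ℝ)) • ∑ i, ∑ j, ∑ l, c' i j l • B i j l) ≤
      basisFactor B * R ^ 2 * ((1 / (n : ℝ)) * ∑ i, frobSq (c i - c' i)) := by
  simp only [← _root_.smul_sub, ← Finset.sum_sub_distrib, ← _root_.sub_smul, ← Matrix.sub_apply]
  calc frobSq ((1 / (n : ℝ)) • ∑ i, ∑ j, ∑ l, (c i - c' i) j l • B i j l)
      ≤ (1 / (n : ℝ)) * ∑ i, frobSq (∑ j, ∑ l, (c i - c' i) j l • B i j l) :=
        frobSq_mean_le_mean_frobSq _
    _ ≤ (1 / (n : ℝ)) * ∑ i, basisFactor B * R ^ 2 * frobSq (c i - c' i) := by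
        gcongr with i
        exact frobSq_expansion_le hB i _
    _ = basisFactor B * R ^ 2 * ((1 / (n : ℝ)) * ∑ i, frobSq (c i - c' i)) := by
        rw [← Finset.mul_sum]
        ring

end Frobenius

section Gradient

lemma differentiable_gradient {E : Type*} [NormedAddCommGroup E] [InnerProductSpace ℝ E]
    [CompleteSpace E] {f : E → ℝ} (hf : ContDiff ℝ 2 f) : Differentiable ℝ (gradient f) :=
  (InnerProductSpace.toDual ℝ E).symm.differentiable.comp
    ((hf.fderiv_right (m := 1) le_rfl).differentiable one_ne_zero)

lemma gradient_const_mul_sum {E ι : Type*} [NormedAddCommGroup E] [InnerProductSpace ℝ E]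
    [CompleteSpace E] [Fintype ι] {f : ι → E → ℝ} (hf : ∀ i, Differentiable ℝ (f i)) (a : ℝ) :
    gradient (fun x => a * ∑ i, f i x) = fun x => a • ∑ i, gradient (f i) x := by
  funext x
  unfold gradient
  rw [fderiv_const_mul (by fun_prop), fderiv_fun_sum fun i _ => hf i x, map_smul, map_sum]

variable {d : ℕ}

lemma toEuclideanCLM_hess (f : EuclideanSpace ℝ (Fin d) → ℝ) (x : EuclideanSpace ℝ (Fin d)) :
    Matrix.toEuclideanCLM (𝕜 := ℝ) (hess f x) = fderiv ℝ (gradient f) x := by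
  apply ContinuousLinearMap.coe_injective
  refine (EuclideanSpace.basisFun (Fin d) ℝ).toBasis.ext fun l => ?_
  ext j
  simp [Matrix.ofLp_toEuclideanCLM, hess]

lemma hess_const_mul_sum {ι : Type*} [Fintype ι] {f : ι → EuclideanSpace ℝ (Fin d) → ℝ}
    (hf : ∀ i, ContDiff ℝ 2 (f i)) (a : ℝ) (x : EuclideanSpace ℝ (Fin d)) :
    hess (fun x => a * ∑ i, f i x) x = a • ∑ i, hess (f i) x := by
  have hgrad (i : ι) : DifferentiableAt ℝ (gradient (f i)) x := differentiable_gradient (hf i) x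
  refine EmbeddingLike.injective (Matrix.toEuclideanCLM (n := Fin d) (𝕜 := ℝ)) ?_
  simp only [map_smul, map_sum, toEuclideanCLM_hess]
  rw [gradient_const_mul_sum fun i => (hf i).differentiable two_ne_zero,
    fderiv_fun_const_smul (by fun_prop), fderiv_fun_sum fun i _ => hgrad i]

lemma norm_fderiv_gradient_mean_sub_le {n : ℕ} (hn : 1 ≤ n)
    {f : Fin n → EuclideanSpace ℝ (Fin d) → ℝ} (hf : ∀ i, ContDiff ℝ 2 (f i)) {H : ℝ}
    (hH : ∀ i x y, specNorm (hess (f i) x - hess (f i) y) ≤ H * ‖x - y‖)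
    (x y : EuclideanSpace ℝ (Fin d)) :
    ‖fderiv ℝ (gradient fun x => (1 / (n : ℝ)) * ∑ i, f i x) x -
      fderiv ℝ (gradient fun x => (1 / (n : ℝ)) * ∑ i, f i x) y‖ ≤ H * ‖x - y‖ := by
  have hn₀ : (n : ℝ) ≠ 0 := by positivity
  rw [← toEuclideanCLM_hess, ← toEuclideanCLM_hess, ← map_sub, hess_const_mul_sum hf,
    hess_const_mul_sum hf, ← _root_.smul_sub, ← Finset.sum_sub_distrib, map_smul, map_sum,
    norm_smul, Real.norm_of_nonneg (by positivity)]
  calc 1 / (n : ℝ) * ‖∑ i, Matrix.toEuclideanCLM (𝕜 := ℝ) (hess (f i) x - hess (f i) y)‖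
      ≤ 1 / (n : ℝ) * ∑ _i : Fin n, H * ‖x - y‖ := by
        gcongr
        exact norm_sum_le_of_le _ fun i _ => hH i x y
    _ = H * ‖x - y‖ := by
        rw [Finset.sum_const, Finset.card_fin, nsmul_eq_mul, one_div_mul_eq_div,
          mul_div_cancel_left₀ _ hn₀]

lemma frobSq_mean_expansion_sub_hess_mean_le {n : ℕ} {f : Fin n → EuclideanSpace ℝ (Fin d) → ℝ}
    (hf : ∀ i, ContDiff ℝ 2 (f i)) {B : Fin n → Fin d → Fin d → Matrix (Fin d) (Fin d) ℝ} {R : ℝ}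
    (hB : ∀ i j l, frobNorm (B i j l) ≤ R) (c : Fin n → Matrix (Fin d) (Fin d) ℝ)
    {c' : Fin n → Matrix (Fin d) (Fin d) ℝ} {x : EuclideanSpace ℝ (Fin d)}
    (hc' : ∀ i, hess (f i) x = ∑ j, ∑ l, c' i j l • B i j l) :
    frobSq ((1 / (n : ℝ)) • ∑ i, ∑ j, ∑ l, c i j l • B i j l -
        hess (fun x => (1 / (n : ℝ)) * ∑ i, f i x) x) ≤
      basisFactor B * R ^ 2 * ((1 / (n : ℝ)) * ∑ i, frobSq (c i - c' i)) := by
  rw [hess_const_mul_sum hf, Finset.sum_congr rfl fun i _ => hc' i]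
  exact frobSq_mean_expansion_sub_le hB c c'

end Gradient

theorem bl1_linear_convergence_general (d n : ℕ) (hn : 1 ≤ n)
    (f : Fin n → EuclideanSpace ℝ (Fin d) → ℝ)
    (hf : ∀ i, ContDiff ℝ 2 (f i))
    (μ : ℝ) (hμ : 0 < μ)
    (fbar : EuclideanSpace ℝ (Fin d) → ℝ)
    (hfbar : fbar = fun x => (1 / (n : ℝ)) * ∑ i, f i x)
    (H : ℝ)
    (hH : ∀ i x y, specNorm (hess (f i) x - hess (f i) y) ≤ H * ‖x - y‖)
    (xstar : EuclideanSpace ℝ (Fin d)) (hstar : gradient fbar xstar = 0)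
    (R : ℝ) (B : Fin n → Fin d → Fin d → Matrix (Fin d) (Fin d) ℝ)
    (hBR : ∀ i j l, frobNorm (B i j l) ≤ R)
    (Lstar : Fin n → Matrix (Fin d) (Fin d) ℝ)
    (hLstar : ∀ i, hess (f i) xstar = ∑ j, ∑ l, (Lstar i) j l • B i j l)
    (δM : ℝ) (hδM0 : 0 < δM) (hδM1 : δM ≤ 1)
    (AM BM : ℝ) (hAM : AM = δM / 4) (hBM : BM = 6 / δM - 7 / 2)
    (z x v : ℕ → EuclideanSpace ℝ (Fin d))
    (L : ℕ → Fin n → Matrix (Fin d) (Fin d) ℝ)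
    (Hmat : ℕ → Matrix (Fin d) (Fin d) ℝ)
    (hHmat : ∀ k, Hmat k = (1 / (n : ℝ)) • ∑ i, ∑ j, ∑ l, (L k i) j l • B i j l)
    (Hhat : ℕ → Matrix (Fin d) (Fin d) ℝ)
    (hHhatpsd : ∀ k, (Hhat k - μ • (1 : Matrix (Fin d) (Fin d) ℝ)).PosSemidef)
    (hHhatproj : ∀ k, frobNorm (Hhat k - hess fbar xstar)
      ≤ frobNorm (Hmat k - hess fbar xstar))
    (hx : ∀ k, x (k + 1) = z k
      - Matrix.toEuclideanCLM (𝕜 := ℝ) (Hhat k)⁻¹ (gradient fbar (z k)))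
    (hv : ∀ k, ‖v k - (x (k + 1) - z k)‖ ^ 2 ≤ (1 - δM) * ‖x (k + 1) - z k‖ ^ 2)
    (hz : ∀ k, z (k + 1) = z k + v k)
    (𝓗 : ℕ → ℝ)
    (h𝓗 : ∀ k, 𝓗 k = (1 / (n : ℝ)) * ∑ i, frobSq (L k i - Lstar i))
    (hnbr1 : ∀ k, ‖z k - xstar‖ ^ 2 ≤ AM * μ ^ 2 / (4 * H ^ 2 * BM))
    (hnbr2 : ∀ k, 𝓗 k ≤ AM * μ ^ 2 / (16 * basisFactor B * R ^ 2 * BM)) :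
    ∀ k, ‖z k - xstar‖ ^ 2 ≤ (1 - AM / 2) ^ k * ‖z 0 - xstar‖ ^ 2 := by
  have hAM₀ : 0 ≤ AM := by linarith
  have hBM₀ : 0 ≤ BM := hBM ▸ six_div_sub_nonneg hδM0 hδM1
  have hbasis : 0 ≤ basisFactor B := basisFactor_nonneg B
  have hHess (k : ℕ) :
      ‖Matrix.toEuclideanCLM (𝕜 := ℝ) (Hhat k) - fderiv ℝ (gradient fbar) xstar‖ ^ 2 ≤
        basisFactor B * R ^ 2 * 𝓗 k := by
    rw [← toEuclideanCLM_hess, ← map_sub, h𝓗]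
    refine le_trans ?_ (frobSq_mean_expansion_sub_hess_mean_le hf hBR (L k) hLstar)
    rw [← hHmat, ← hfbar, ← norm_frobVec_sq, norm_frobVec]
    gcongr
    exact (norm_toEuclideanCLM_le_frobNorm _).trans (hHhatproj k)
  subst hfbar
  refine compressed_quasiNewton_linear_convergence
    (differentiable_gradient (contDiff_const.mul (ContDiff.sum fun i _ => hf i)))
    (norm_fderiv_gradient_mean_sub_le hn hf hH) hstar hμ hδM0 hδM1 hAM hBM (x := x)
    (fun k => mul_norm_le_norm_toEuclideanCLM_of_posSemidef_sub (hHhatpsd k)) (fun k => ?_)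
    (fun k => by simpa only [hz, add_sub_assoc, sub_sub_eq_add_sub, add_comm] using hv k)
    (fun k => mul_le_of_le_div₀ (by positivity) (by positivity) (hnbr1 k)) fun k => ?_
  · rw [hx, sub_sub_cancel_left, map_neg,
      toEuclideanCLM_apply_inv_apply_of_posSemidef_sub hμ (hHhatpsd k)]
  · calc _ ≤ basisFactor B * R ^ 2 * 𝓗 k * (16 * BM) := by gcongr; exact hHess k
      _ = 𝓗 k * (16 * basisFactor B * R ^ 2 * BM) := by ring
      _ ≤ AM * μ ^ 2 := mul_le_of_le_div₀ (by positivity) (by positivity) (hnbr2 k)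

/-- Theorem 4.8 (linear convergence of BL1), in the case `p = 1` with deterministic
contraction compressors for both Hessians and models. -/
theorem bl1_linear_convergence (d n : ℕ) (hn : 1 ≤ n)
    (f : Fin n → EuclideanSpace ℝ (Fin d) → ℝ)
    (hf : ∀ i, ContDiff ℝ 2 (f i))
    (μ : ℝ) (hμ : 0 < μ)
    (fbar : EuclideanSpace ℝ (Fin d) → ℝ)
    (hfbar : fbar = fun x => (1 / (n : ℝ)) * ∑ i, f i x)
    (hsc : ∀ x, ((hess fbar x) - μ • (1 : Matrix (Fin d) (Fin d) ℝ)).PosSemidef)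
    (H : ℝ)
    (hH : ∀ i x y, specNorm (hess (f i) x - hess (f i) y) ≤ H * ‖x - y‖)
    (xstar : EuclideanSpace ℝ (Fin d)) (hstar : gradient fbar xstar = 0)
    (R : ℝ) (B : Fin n → Fin d → Fin d → Matrix (Fin d) (Fin d) ℝ)
    (hBR : ∀ i j l, frobNorm (B i j l) ≤ R)
    (ℓ : Fin n → EuclideanSpace ℝ (Fin d) → Matrix (Fin d) (Fin d) ℝ)
    (hrep : ∀ i x, hess (f i) x = ∑ j, ∑ l, (ℓ i x) j l • B i j l)
    (M₁ : ℝ)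
    (hℓLip : ∀ i x y, frobNorm (ℓ i x - ℓ i y) ≤ M₁ * ‖x - y‖)
    (NB : ℝ)
    (hNB : NB = if (∀ i (j l j' l' : Fin d), (j, l) ≠ (j', l') →
        frobInner (B i j l) (B i j' l') = 0) then (1 : ℝ) else (d : ℝ) ^ 2)
    (δ δM : ℝ) (hδ0 : 0 < δ) (hδ1 : δ ≤ 1) (hδM0 : 0 < δM) (hδM1 : δM ≤ 1)
    (AM BM : ℝ) (hAM : AM = δM / 4) (hBM : BM = 6 / δM - 7 / 2)
    (z x v : ℕ → EuclideanSpace ℝ (Fin d))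
    (L S : ℕ → Fin n → Matrix (Fin d) (Fin d) ℝ)
    (hS : ∀ k i, frobSq (S k i - (ℓ i (z k) - L k i))
      ≤ (1 - δ) * frobSq (ℓ i (z k) - L k i))
    (hL : ∀ k i, L (k + 1) i = L k i + S k i)
    (Hmat : ℕ → Matrix (Fin d) (Fin d) ℝ)
    (hHmat : ∀ k, Hmat k = (1 / (n : ℝ)) • ∑ i, ∑ j, ∑ l, (L k i) j l • B i j l)
    (Hhat : ℕ → Matrix (Fin d) (Fin d) ℝ)
    (hHhatsymm : ∀ k, (Hhat k).IsSymm)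
    (hHhatpsd : ∀ k, (Hhat k - μ • (1 : Matrix (Fin d) (Fin d) ℝ)).PosSemidef)
    (hHhatproj : ∀ k, frobNorm (Hhat k - hess fbar xstar)
      ≤ frobNorm (Hmat k - hess fbar xstar))
    (hx : ∀ k, x (k + 1) = z k
      - Matrix.toEuclideanCLM (𝕜 := ℝ) (Hhat k)⁻¹ (gradient fbar (z k)))
    (hv : ∀ k, ‖v k - (x (k + 1) - z k)‖ ^ 2 ≤ (1 - δM) * ‖x (k + 1) - z k‖ ^ 2)
    (hz : ∀ k, z (k + 1) = z k + v k)
    (𝓗 : ℕ → ℝ)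
    (h𝓗 : ∀ k, 𝓗 k = (1 / (n : ℝ)) * ∑ i, frobSq (L k i - ℓ i xstar))
    (hnbr1 : ∀ k, ‖z k - xstar‖ ^ 2 ≤ AM * μ ^ 2 / (4 * H ^ 2 * BM))
    (hnbr2 : ∀ k, 𝓗 k ≤ AM * μ ^ 2 / (16 * NB * R ^ 2 * BM)) :
    ∀ k, ‖z k - xstar‖ ^ 2 ≤ (1 - AM / 2) ^ k * ‖z 0 - xstar‖ ^ 2 := by
  subst hNB
  exact bl1_linear_convergence_general d n hn f hf μ hμ fbar hfbar H hH xstar hstar R B hBR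
    (fun i => ℓ i xstar) (fun i => hrep i xstar) δM hδM0 hδM1 AM BM hAM hBM z x v L Hmat hHmat
    Hhat hHhatpsd hHhatproj hx hv hz 𝓗 h𝓗 hnbr1 hnbr2
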